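/- For every θ ∈ [0,1), the set of finite nonempty subwords of the two-sided sequence v_{α,θ} equals the set of finite nonempty subwords of the one-sided infinite word c_α; consequently W_α = Sub(c_α) = Sub(v_{α,θ}) for all θ ∈ [0,1). -/

import Mathlib

open scoped Classical

noncomputable section

/-- The Sturmian potential `v_{α,θ}(n) = χ_{[1-α,1)}(nα + θ mod 1)`. -/
def sturmian (α θ : ℝ) (n : ℤ) : ℝ :=
  if Int.fract (n * α + θ) ∈ Set.Ico (1 - α) 1 then 1 else 0

/-- Iterates of the Gauss map, starting at `α`. -/
def cfGauss (α : ℝ) : ℕ → ℝ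
  | 0 => α
  | n + 1 => Int.fract (cfGauss α n)⁻¹

/-- The continued fraction coefficients `a_n` of `α = [a_1, a_2, …]` (for `n ≥ 1`):
`a_1 = ⌊1/α⌋`, `a_2 = ⌊1/fract(1/α)⌋`, … . -/
def cfCoeff (α : ℝ) (n : ℕ) : ℕ := ⌊(cfGauss α (n - 1))⁻¹⌋₊

/-- The standard words, with an index shift: `sWord a n` is `s_{n-1}`.  Thus
`sWord a 0 = s_{-1} = 1`, `sWord a 1 = s_0 = 0`, `sWord a 2 = s_1 = 0^{a_1 - 1} 1`, and
`sWord a (n+1) = s_n = s_{n-1}^{a_n} s_{n-2}` for `n ≥ 2`. -/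
def sWord (a : ℕ → ℕ) : ℕ → List ℝ
  | 0 => [1]
  | 1 => [0]
  | 2 => List.replicate (a 1 - 1) (0 : ℝ) ++ [1]
  | n + 3 => (List.replicate (a (n + 2)) (sWord a (n + 2))).flatten ++ sWord a (n + 1)

/-- The `n`-th letter (for `n ≥ 1`) of the one-sided infinite word `c_α = lim s_n`:
since `|s_n| ≥ n`, it is the `n`-th letter of `s_n`. -/
def cword (α : ℝ) (n : ℕ) : ℝ := (sWord (cfCoeff α) (n + 1)).getD (n - 1) 0

/-- `w` is a (finite) prefix of the one-sided infinite word `c_α`. -/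
def IsPrefC (α : ℝ) (w : List ℝ) : Prop :=
  w = (List.range w.length).map fun i => cword α (i + 1)

/-- The one-step transfer matrix `T(λ,E,a) = [[E - λa, -1], [1, 0]]`. -/
def transferT (lam : ℝ) (E : ℂ) (a : ℝ) : Matrix (Fin 2) (Fin 2) ℂ :=
  !![E - lam * a, -1; 1, 0]

/-- The transfer matrix over a word `w = w_1 … w_n`:
`M(λ,E,w) = T(λ,E,w_n) ⋯ T(λ,E,w_1)`. -/
def transferM (lam : ℝ) (E : ℂ) : List ℝ → Matrix (Fin 2) (Fin 2) ℂ
  | [] => 1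
  | a :: w => transferM lam E w * transferT lam E a

/-- The operator norm on `ℂ²` (with the euclidean norm) of a `2 × 2` complex matrix. -/
def opNorm (A : Matrix (Fin 2) (Fin 2) ℂ) : ℝ :=
  ‖Matrix.toEuclideanCLM (𝕜 := ℂ) A‖

/-- The word `v_{α,θ}^n = v_{α,θ}(1) … v_{α,θ}(n)`. -/
def sturmianWord (α θ : ℝ) (n : ℕ) : List ℝ :=
  (List.range n).map fun k => sturmian α θ (k + 1)

/-- The set of finite nonempty subwords of a two-sided sequence `v : ℤ → ℝ`. -/
def SubZ (v : ℤ → ℝ) : Set (List ℝ) :=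
  {w | w ≠ [] ∧ ∃ k : ℤ, w = (List.range w.length).map fun i => v (k + i)}

/-- The set of finite nonempty subwords of the one-sided word `c_α` (indexed from `1`). -/
def SubC (α : ℝ) : Set (List ℝ) :=
  {w | w ≠ [] ∧ ∃ k : ℕ, 1 ≤ k ∧ w = (List.range w.length).map fun i => cword α (k + i)}

/-- `W_α`, the set of all finite nonempty subwords of the sequences `v_{α,θ}`, `θ ∈ [0,1)`. -/
def Walpha (α : ℝ) : Set (List ℝ) :=
  {w | ∃ θ ∈ Set.Ico (0 : ℝ) 1, w ∈ SubZ (sturmian α θ)}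

/-- `α` is a bounded density number: `limsup_{n→∞} (1/n) ∑_{j=1}^n a_j < ∞` for the
continued fraction coefficients `a_j` of `α`. -/
def BoundedDensity (α : ℝ) : Prop :=
  Filter.IsBoundedUnder (· ≤ ·) Filter.atTop
    (fun n : ℕ => (1 / n : ℝ) * ∑ j ∈ Finset.Icc 1 n, (cfCoeff α j : ℝ))

end

/-!
An irrational rotation is minimal and `θ ↦ v_{α,θ}(n)` is right-continuous, so every block of
`v_{α,θ}` also occurs in `v_{α,θ'}`, at a positive position. It remains to see that
`c_α(n) = v_{α,0}(n)` for `n ≥ 1`. Let `p_n / q_n` be the convergents of `α`. By the law of best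
approximation no integer separates `jα` from `jα + (q_n α - p_n)` when `0 < j < q_{n+1}`, hence
`v_{α,0}(q_n + j) = v_{α,0}(j)` for `0 < j < q_{n+1} - 1`. This gives the recursion
`s_{n+1} = s_n^{a_{n+1}} s_{n-1}` for the prefixes of `v_{α,0}(1) v_{α,0}(2) …` of length `q_n`,
except for their last letter, which is determined by the sign of `q_n α - p_n`.
-/

open Filter Topology

section Rotation

variable {α : ℝ}

lemma sturmian_eq_floor_sub_floor (hα : α ∈ Set.Ioo (0 : ℝ) 1) (θ : ℝ) (n : ℤ) :
    sturmian α θ n = ((⌊(n + 1) * α + θ⌋ - ⌊n * α + θ⌋ : ℤ) : ℝ) := by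
  rw [show (n + 1) * α + θ = n * α + θ + α by ring]
  unfold sturmian
  generalize (n : ℝ) * α + θ = x
  have hx := Int.floor_add_fract x
  have hfract := Int.fract_lt_one x
  split_ifs with h
  · have : ⌊x + α⌋ = ⌊x⌋ + 1 := by
      rw [Int.floor_eq_iff]
      push_cast
      constructor <;> linarith [h.1, hα.2]
    simp [this]
  · have hlt : Int.fract x < 1 - α := not_le.1 fun hle => h ⟨hle, hfract⟩
    have : ⌊x + α⌋ = ⌊x⌋ := by
      rw [Int.floor_eq_iff]
      constructor <;> linarith [Int.fract_nonneg x, hα.1]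
    simp [this]

lemma sturmian_add_left (α θ : ℝ) (k n : ℤ) :
    sturmian α θ (k + n) = sturmian α (θ + k * α) n := by
  simp only [sturmian, Int.cast_add]
  ring_nf

lemma sturmian_add_intCast (α θ : ℝ) (m n : ℤ) : sturmian α (θ + m) n = sturmian α θ n := by
  simp only [sturmian, ← add_assoc, Int.fract_add_intCast]

lemma eventually_sturmian_eq (hα : α ∈ Set.Ioo (0 : ℝ) 1) (θ : ℝ) (n : ℤ) :
    ∀ᶠ t in 𝓝[>] θ, sturmian α t n = sturmian α θ n := by
  have floor_eq (c : ℝ) : ∀ᶠ t in 𝓝[>] θ, ⌊c + t⌋ = ⌊c + θ⌋ := by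
    have hshift : Tendsto (c + ·) (𝓝[>] θ) (𝓝[≥] (c + θ)) :=
      tendsto_nhdsWithin_iff.2 ⟨(continuous_const_add c).continuousWithinAt,
        eventually_mem_nhdsWithin.mono fun t ht => add_le_add_right (le_of_lt ht) c⟩
    exact tendsto_pure.1 ((tendsto_floor_right_pure_floor (c + θ)).comp hshift)
  filter_upwards [floor_eq (n * α), floor_eq ((n + 1) * α)] with t h₀ h₁
  rw [sturmian_eq_floor_sub_floor hα, sturmian_eq_floor_sub_floor hα, h₀, h₁]

lemma denseRange_natCast_mul_add_intCast_add (hirr : Irrational α) (θ : ℝ) :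
    DenseRange fun p : ℕ × ℤ => p.1 * α + p.2 + θ := by
  have : Fact ((0 : ℝ) < 1) := ⟨one_pos⟩
  have hcircle : DenseRange fun n : ℕ => n • (α : AddCircle (1 : ℝ)) := by
    rw [← denseRange_zsmul_iff_nsmul, AddCircle.denseRange_zsmul_coe_iff]
    simpa using hirr
  have hline : DenseRange fun p : ℕ × ℤ => p.1 * α + p.2 := by
    refine (hcircle.preimage QuotientAddGroup.isOpenMap_coe).mono ?_
    rintro x ⟨n, hn⟩
    obtain ⟨m, hm⟩ := (AddCircle.coe_eq_zero_iff (1 : ℝ)).1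
      (show ((x - n • α : ℝ) : AddCircle (1 : ℝ)) = 0 by
        rw [AddCircle.coe_sub, AddCircle.coe_nsmul, sub_eq_zero]
        exact hn.symm)
    simp only [zsmul_eq_mul, mul_one, nsmul_eq_mul] at hm
    exact ⟨(n, m), by simp [hm]⟩
  exact (Homeomorph.addRight θ).surjective.denseRange.comp hline (continuous_add_const θ)

lemma exists_pos_sturmian_add_eq (hirr : Irrational α) (hα : α ∈ Set.Ioo (0 : ℝ) 1)
    (θ θ' : ℝ) (k : ℤ) (L : ℕ) :
    ∃ k' : ℕ, 1 ≤ k' ∧ ∀ i : ℕ, i < L → sturmian α θ' (k' + i) = sturmian α θ (k + i) := by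
  have hev : ∀ᶠ t in 𝓝[>] (θ + k * α), ∀ i ∈ Finset.range L,
      sturmian α t i = sturmian α (θ + k * α) i :=
    (eventually_all_finset _).2 fun i _ => eventually_sturmian_eq hα _ i
  obtain ⟨u, hu, hsub⟩ := mem_nhdsGT_iff_exists_Ioo_subset.1 hev
  obtain ⟨⟨n, m⟩, hnm⟩ := (denseRange_natCast_mul_add_intCast_add hirr (θ' + α)).exists_mem_open
    isOpen_Ioo (Set.nonempty_Ioo.2 hu)
  refine ⟨n + 1, by lia, fun i hi => ?_⟩
  calc sturmian α θ' ((n + 1 : ℕ) + i)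
      = sturmian α (θ' + (n + 1) * α) i := by rw [sturmian_add_left]; push_cast; rfl
    _ = sturmian α (θ' + (n + 1) * α + m) i := (sturmian_add_intCast _ _ _ _).symm
    _ = sturmian α (n * α + m + (θ' + α)) i := by ring_nf
    _ = sturmian α (θ + k * α) i := hsub hnm i (Finset.mem_range.2 hi)
    _ = sturmian α θ (k + i) := (sturmian_add_left α θ k i).symm

end Rotation

section Convergents

/-- The denominator `q_n` of the `n`-th convergent `[a_1, …, a_n]`, so `q_0 = 1`, `q_1 = a_1`.
It is the length of the standard word `s_n = sWord a (n + 1)`. -/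
def convDen (a : ℕ → ℕ) : ℕ → ℕ
  | 0 => 1
  | 1 => a 1
  | n + 2 => a (n + 2) * convDen a (n + 1) + convDen a n

/-- The numerator `p_n` of the `n`-th convergent `[a_1, …, a_n]`, so `p_0 = 0`, `p_1 = 1`. -/
def convNum (a : ℕ → ℕ) : ℕ → ℕ
  | 0 => 0
  | 1 => 1
  | n + 2 => a (n + 2) * convNum a (n + 1) + convNum a n

/-- The signed approximation error `q_n α - p_n` of the `n`-th convergent of `α`. -/
noncomputable def convErr (α : ℝ) (n : ℕ) : ℝ :=
  convDen (cfCoeff α) n * α - convNum (cfCoeff α) n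

variable {a : ℕ → ℕ} {α : ℝ}

lemma convDen_pos (ha : ∀ n, 0 < a (n + 1)) : ∀ n, 0 < convDen a n
  | 0 => one_pos
  | 1 => ha 0
  | n + 2 => Nat.add_pos_right _ (convDen_pos ha n)

lemma le_convDen (ha : ∀ n, 0 < a (n + 1)) : ∀ n, n ≤ convDen a n
  | 0 => Nat.zero_le _
  | 1 => ha 0
  | n + 2 => calc
    n + 1 + 1 ≤ convDen a (n + 1) + convDen a n :=
      add_le_add (le_convDen ha (n + 1)) (convDen_pos ha n)
    _ ≤ convDen a (n + 2) := Nat.add_le_add_right (Nat.le_mul_of_pos_left _ (ha (n + 1))) _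

lemma convDen_mul_convNum_sub (a : ℕ → ℕ) (n : ℕ) :
    (convDen a n * convNum a (n + 1) - convDen a (n + 1) * convNum a n : ℤ) = (-1) ^ n := by
  induction n with
  | zero => simp [convDen, convNum]
  | succ n ih =>
    simp only [convDen, convNum, Nat.cast_add, Nat.cast_mul, pow_succ, ← ih]
    ring

lemma exists_eq_mul_convDen_add_mul_convNum_add (a : ℕ → ℕ) (n : ℕ) (j m : ℤ) :
    ∃ x y : ℤ, j = x * convDen a n + y * convDen a (n + 1) ∧
      m = x * convNum a n + y * convNum a (n + 1) := by
  have hdet := convDen_mul_convNum_sub a n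
  have hsq : ((-1) ^ n * (-1) ^ n : ℤ) = 1 := by rw [← mul_pow]; simp
  refine ⟨(-1) ^ n * (j * convNum a (n + 1) - m * convDen a (n + 1)),
    (-1) ^ n * (m * convDen a n - j * convNum a n), ?_, ?_⟩
  · linear_combination (-j) * hsq - j * (-1) ^ n * hdet
  · linear_combination (-m) * hsq - m * (-1) ^ n * hdet

lemma irrational_cfGauss (hirr : Irrational α) : ∀ n, Irrational (cfGauss α n)
  | 0 => hirr
  | n + 1 => (irrational_cfGauss hirr n).inv.sub_intCast _

lemma cfGauss_mem_Ioo (hirr : Irrational α) (hα : α ∈ Set.Ioo (0 : ℝ) 1) :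
    ∀ n, cfGauss α n ∈ Set.Ioo (0 : ℝ) 1
  | 0 => hα
  | n + 1 => ⟨(Int.fract_nonneg _).lt_of_ne' (irrational_cfGauss hirr (n + 1)).ne_zero,
      Int.fract_lt_one _⟩

lemma cfCoeff_succ_eq_inv_sub (hirr : Irrational α) (hα : α ∈ Set.Ioo (0 : ℝ) 1) (n : ℕ) :
    (cfCoeff α (n + 1) : ℝ) = (cfGauss α n)⁻¹ - cfGauss α (n + 1) := by
  have hpos := (cfGauss_mem_Ioo hirr hα n).1
  simp only [cfCoeff, cfGauss, Nat.add_sub_cancel, Int.self_sub_fract]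
  exact natCast_floor_eq_intCast_floor (inv_nonneg.2 hpos.le)

lemma cfCoeff_succ_pos (hirr : Irrational α) (hα : α ∈ Set.Ioo (0 : ℝ) 1) (n : ℕ) :
    0 < cfCoeff α (n + 1) := by
  obtain ⟨h₀, h₁⟩ := cfGauss_mem_Ioo hirr hα n
  exact Nat.floor_pos.2 ((one_lt_inv₀ h₀).2 h₁).le

lemma convErr_zero (α : ℝ) : convErr α 0 = α := by
  simp [convErr, convDen, convNum]

lemma convErr_one (α : ℝ) : convErr α 1 = cfCoeff α 1 * α - 1 := by
  simp [convErr, convDen, convNum]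

lemma convErr_add_two (α : ℝ) (n : ℕ) :
    convErr α (n + 2) = cfCoeff α (n + 2) * convErr α (n + 1) + convErr α n := by
  simp only [convErr, convDen, convNum, Nat.cast_add, Nat.cast_mul]
  ring

lemma convErr_succ (hirr : Irrational α) (hα : α ∈ Set.Ioo (0 : ℝ) 1) (n : ℕ) :
    convErr α (n + 1) = -cfGauss α (n + 1) * convErr α n := by
  induction n with
  | zero =>
    have hne := hα.1.ne'
    rw [convErr_one, convErr_zero, cfCoeff_succ_eq_inv_sub hirr hα 0]
    simp only [cfGauss]
    field_simp
    ring
  | succ n ih =>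
    have hne := (cfGauss_mem_Ioo hirr hα (n + 1)).1.ne'
    rw [convErr_add_two, cfCoeff_succ_eq_inv_sub hirr hα (n + 1), ih]
    field_simp
    ring

lemma neg_one_pow_mul_convErr_pos (hirr : Irrational α) (hα : α ∈ Set.Ioo (0 : ℝ) 1) (n : ℕ) :
    0 < (-1) ^ n * convErr α n := by
  induction n with
  | zero => simpa [convErr_zero] using hα.1
  | succ n ih =>
    have : (-1) ^ (n + 1) * convErr α (n + 1)
        = cfGauss α (n + 1) * ((-1) ^ n * convErr α n) := by
      rw [convErr_succ hirr hα, pow_succ]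
      ring
    exact this ▸ mul_pos (cfGauss_mem_Ioo hirr hα (n + 1)).1 ih

lemma abs_convErr (hirr : Irrational α) (hα : α ∈ Set.Ioo (0 : ℝ) 1) (n : ℕ) :
    |convErr α n| = (-1) ^ n * convErr α n := by
  rw [← abs_of_pos (neg_one_pow_mul_convErr_pos hirr hα n), abs_mul, abs_neg_one_pow, one_mul]

lemma strictAnti_abs_convErr (hirr : Irrational α) (hα : α ∈ Set.Ioo (0 : ℝ) 1) :
    StrictAnti fun n => |convErr α n| := by
  refine strictAnti_nat_of_succ_lt fun n => ?_
  obtain ⟨h₀, h₁⟩ := cfGauss_mem_Ioo hirr hα (n + 1)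
  have hpos : 0 < |convErr α n| :=
    abs_convErr hirr hα n ▸ neg_one_pow_mul_convErr_pos hirr hα n
  rw [convErr_succ hirr hα, abs_mul, abs_neg, abs_of_pos h₀]
  exact mul_lt_of_lt_one_left hpos h₁

lemma opposite_signs_of_pos_of_lt {q q' x y : ℤ} (hq : 0 < q) (hpos : 0 < x * q + y * q')
    (hlt : x * q + y * q' < q') : 1 ≤ x ∧ y ≤ 0 ∨ x ≤ -1 ∧ 1 ≤ y := by
  rcases le_or_gt y 0 with hy | hy
  · exact .inl ⟨by nlinarith, hy⟩
  · exact .inr ⟨by nlinarith, hy⟩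

lemma abs_convErr_le_abs_mul_sub (hirr : Irrational α) (hα : α ∈ Set.Ioo (0 : ℝ) 1) {n : ℕ}
    {j : ℤ} (hj : 0 < j) (hj' : j < convDen (cfCoeff α) (n + 1)) (m : ℤ) :
    |convErr α n| ≤ |j * α - m| := by
  obtain ⟨x, y, rfl, rfl⟩ := exists_eq_mul_convDen_add_mul_convNum_add (cfCoeff α) n j m
  have hq : (0 : ℤ) < convDen (cfCoeff α) n :=
    mod_cast convDen_pos (cfCoeff_succ_pos hirr hα) n
  obtain ⟨h₀, h₁⟩ := cfGauss_mem_Ioo hirr hα (n + 1)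
  have hcoord : 1 ≤ |x - y * cfGauss α (n + 1)| := by
    rcases opposite_signs_of_pos_of_lt hq hj hj' with ⟨hx, hy⟩ | ⟨hx, hy⟩
    · have hx' : (1 : ℝ) ≤ x := mod_cast hx
      have hy' : (y : ℝ) ≤ 0 := mod_cast hy
      exact le_abs.2 (.inl (by nlinarith))
    · have hx' : (x : ℝ) ≤ -1 := mod_cast hx
      have hy' : (1 : ℝ) ≤ y := mod_cast hy
      exact le_abs.2 (.inr (by nlinarith))
  calc |convErr α n|
      ≤ |convErr α n| * |x - y * cfGauss α (n + 1)| :=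
        le_mul_of_one_le_right (abs_nonneg _) hcoord
    _ = |x * convErr α n + y * convErr α (n + 1)| := by
        rw [← abs_mul, convErr_succ hirr hα]
        ring_nf
    _ = _ := by
        simp only [convErr]
        push_cast
        ring_nf

lemma floor_add_eq_floor {x δ : ℝ} (hδ : ∀ m : ℤ, |δ| ≤ |x - m|) (hne : ∀ m : ℤ, x + δ ≠ m) :
    ⌊x + δ⌋ = ⌊x⌋ := by
  have hlow := hδ ⌊x⌋
  have hhigh := hδ (⌊x⌋ + 1)
  push_cast at hhigh
  rw [abs_of_nonneg (sub_nonneg.2 (Int.floor_le x))] at hlow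
  rw [abs_of_neg (sub_neg.2 (Int.lt_floor_add_one x))] at hhigh
  rw [Int.floor_eq_iff]
  refine ⟨by linarith [neg_abs_le δ], lt_of_le_of_ne (by linarith [le_abs_self δ]) ?_⟩
  exact_mod_cast hne (⌊x⌋ + 1)

lemma floor_convDen_add_mul (hirr : Irrational α) (hα : α ∈ Set.Ioo (0 : ℝ) 1) {n j : ℕ}
    (hj : 0 < j) (hj' : j < convDen (cfCoeff α) (n + 1)) :
    ⌊(convDen (cfCoeff α) n + j) * α⌋ = ⌊j * α⌋ + convNum (cfCoeff α) n := by
  have hbest (m : ℤ) : |convErr α n| ≤ |j * α - m| := by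
    exact_mod_cast abs_convErr_le_abs_mul_sub hirr hα (j := j) (mod_cast hj) (mod_cast hj') m
  have hsplit : (convDen (cfCoeff α) n + j) * α
      = j * α + convErr α n + convNum (cfCoeff α) n := by
    rw [convErr]
    ring
  have hirr' : Irrational (j * α + convErr α n) := by
    have := hirr.natCast_mul (m := convDen (cfCoeff α) n + j) (by lia)
    rw [Nat.cast_add, hsplit] at this
    exact this.of_add_natCast _
  rw [hsplit, Int.floor_add_natCast, floor_add_eq_floor hbest hirr'.ne_int]

end Convergents

section StandardWords

variable {α : ℝ}

lemma sturmian_convDen_add (hirr : Irrational α) (hα : α ∈ Set.Ioo (0 : ℝ) 1) {n j : ℕ}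
    (hj : 0 < j) (hj' : j + 1 < convDen (cfCoeff α) (n + 1)) :
    sturmian α 0 (convDen (cfCoeff α) n + j) = sturmian α 0 j := by
  have h₀ := floor_convDen_add_mul hirr hα hj (Nat.lt_of_succ_lt hj')
  have h₁ := floor_convDen_add_mul hirr hα (Nat.succ_pos j) hj'
  simp only [sturmian_eq_floor_sub_floor hα, add_zero]
  push_cast [← add_assoc] at h₀ h₁ ⊢
  rw [h₀, h₁]
  push_cast
  ring

lemma sturmian_convDen (hirr : Irrational α) (hα : α ∈ Set.Ioo (0 : ℝ) 1) {n : ℕ} (hn : 0 < n) :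
    sturmian α 0 (convDen (cfCoeff α) n) = (n % 2 : ℕ) := by
  have hpos := neg_one_pow_mul_convErr_pos hirr hα n
  have hanti := strictAnti_abs_convErr hirr hα
  have hdecomp : convDen (cfCoeff α) n * α = convErr α n + convNum (cfCoeff α) n := by
    rw [convErr]
    ring
  simp only [sturmian, Int.cast_natCast, add_zero, hdecomp, Int.fract_add_natCast]
  rcases Nat.even_or_odd n with heven | hodd
  · have hlt : convErr α n < 1 - α := by
      have h : |convErr α n| < |convErr α 1| := hanti (by obtain ⟨m, rfl⟩ := heven; lia)
      have ha : (1 : ℝ) ≤ cfCoeff α 1 := mod_cast cfCoeff_succ_pos hirr hα 0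
      rw [abs_convErr hirr hα, abs_convErr hirr hα, heven.neg_one_pow, convErr_one] at h
      nlinarith [hα.1]
    rw [heven.neg_one_pow, one_mul] at hpos
    rw [Int.fract_eq_self.2 ⟨hpos.le, by linarith [hα.1]⟩, if_neg fun h => hlt.not_ge h.1]
    simp [Nat.even_iff.1 heven]
  · have hgt : -α < convErr α n := by
      have h : |convErr α n| < |convErr α 0| := hanti hn
      rw [abs_convErr hirr hα, abs_convErr hirr hα, hodd.neg_one_pow, convErr_zero] at h
      linarith
    rw [hodd.neg_one_pow] at hpos
    have hfract : Int.fract (convErr α n) = convErr α n + 1 :=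
      Int.fract_eq_iff.2 ⟨by linarith [hα.2], by linarith, -1, by push_cast; ring⟩
    rw [hfract, if_pos ⟨by linarith, by linarith⟩]
    simp [Nat.odd_iff.1 hodd]

lemma sturmianWord_eq_map (α θ : ℝ) (n : ℕ) :
    sturmianWord α θ n = (List.range n).map fun k : ℕ => sturmian α θ (k + 1 : ℕ) := by
  -- In `sturmianWord`, as in `SubZ`, the cast `ℕ → ℤ` is a monadic map over `List.range n`.
  simp only [sturmianWord, bind_pure_comp, List.map_eq_map, List.map_map]
  rfl

lemma sturmianWord_succ (α θ : ℝ) (n : ℕ) :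
    sturmianWord α θ (n + 1) = sturmianWord α θ n ++ [sturmian α θ (n + 1 : ℕ)] := by
  simp only [sturmianWord_eq_map, List.range_succ, List.map_append, List.map_singleton]

lemma sturmianWord_add {θ : ℝ} {q r : ℕ}
    (hper : ∀ j : ℕ, 0 < j → j ≤ r → sturmian α θ (q + j) = sturmian α θ j) :
    sturmianWord α θ (q + r) = sturmianWord α θ q ++ sturmianWord α θ r := by
  simp only [sturmianWord_eq_map, List.range_add, List.map_append, List.map_map]
  congr 1
  refine List.map_congr_left fun j hj => ?_
  have := hper (j + 1) j.succ_pos (List.mem_range.1 hj)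
  simpa [add_assoc] using this

lemma flatten_replicate_sturmianWord_append {θ : ℝ} {q r : ℕ} (k : ℕ)
    (hper : ∀ j : ℕ, 0 < j → q + j ≤ k * q + r → sturmian α θ (q + j) = sturmian α θ j) :
    (List.replicate k (sturmianWord α θ q)).flatten ++ sturmianWord α θ r
      = sturmianWord α θ (k * q + r) := by
  induction k with
  | zero => simp
  | succ k ih =>
    rw [Nat.succ_mul] at hper ⊢
    rw [List.replicate_succ, List.flatten_cons, List.append_assoc,
      ih fun j hj hle => hper j hj (by lia), ← sturmianWord_add fun j hj hle => hper j hj (by lia)]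
    congr 1
    lia

lemma sWord_two_cfCoeff (hirr : Irrational α) (hα : α ∈ Set.Ioo (0 : ℝ) 1) :
    sWord (cfCoeff α) 2 = sturmianWord α 0 (cfCoeff α 1 - 1) ++ [1] := by
  have herr : cfCoeff α 1 * α < 1 := by
    have := neg_one_pow_mul_convErr_pos hirr hα 1
    rw [convErr_one] at this
    linarith
  have hzero (j : ℕ) (hj : j + 1 < cfCoeff α 1) : sturmian α 0 (j + 1 : ℕ) = 0 := by
    have hj' : (j : ℝ) + 1 + 1 ≤ cfCoeff α 1 := mod_cast hj
    have hlt : ((j : ℝ) + 1) * α < 1 - α := by nlinarith [hα.1]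
    have hnonneg : 0 ≤ ((j : ℝ) + 1) * α := mul_nonneg (by positivity) hα.1.le
    have hfract : Int.fract (((j : ℝ) + 1) * α) = (j + 1) * α :=
      Int.fract_eq_self.2 ⟨hnonneg, by linarith [hα.1]⟩
    simp [sturmian, hfract, hlt.not_ge]
  rw [sWord, sturmianWord_eq_map]
  congr 1
  refine (List.eq_replicate_iff.2 ⟨by simp, ?_⟩).symm
  simp only [List.mem_map, List.mem_range]
  rintro _ ⟨j, hj, rfl⟩
  exact hzero j (by lia)

lemma sturmianWord_convDen_succ (hirr : Irrational α) (hα : α ∈ Set.Ioo (0 : ℝ) 1) (n : ℕ) :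
    sturmianWord α 0 (convDen (cfCoeff α) (n + 1))
      = sturmianWord α 0 (convDen (cfCoeff α) (n + 1) - 1) ++ [(((n + 1) % 2 : ℕ) : ℝ)] := by
  have hpos := convDen_pos (cfCoeff_succ_pos hirr hα) (n + 1)
  rw [← sturmian_convDen hirr hα n.succ_pos]
  obtain ⟨q, hq⟩ := Nat.exists_eq_add_one.2 hpos
  rw [hq, sturmianWord_succ, Nat.add_sub_cancel]

/-- Splitting off the last letter makes the recursion uniform: if `a_1 = 1`, then `s_0 = 0` is not
a prefix of `v_{α,0}(1) v_{α,0}(2) …`, but the identity below holds for `s_0` all the same. -/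
lemma sWord_succ_eq_append (hirr : Irrational α) (hα : α ∈ Set.Ioo (0 : ℝ) 1) :
    ∀ n, sWord (cfCoeff α) (n + 1)
      = sturmianWord α 0 (convDen (cfCoeff α) n - 1) ++ [((n % 2 : ℕ) : ℝ)]
  | 0 => by simp [sWord, convDen, sturmianWord]
  | 1 => by simpa [convDen] using sWord_two_cfCoeff hirr hα
  | n + 2 => by
    have hpos := convDen_pos (cfCoeff_succ_pos hirr hα) n
    have hrec : convDen (cfCoeff α) (n + 2) - 1 = cfCoeff α (n + 2) * convDen (cfCoeff α) (n + 1)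
        + (convDen (cfCoeff α) n - 1) := Nat.add_sub_assoc hpos _
    rw [sWord, sWord_succ_eq_append hirr hα n, sWord_succ_eq_append hirr hα (n + 1),
      ← sturmianWord_convDen_succ hirr hα n, ← List.append_assoc,
      flatten_replicate_sturmianWord_append, ← hrec, Nat.add_mod_right]
    intro j hj hle
    have hq := convDen_pos (cfCoeff_succ_pos hirr hα) (n + 1)
    exact sturmian_convDen_add hirr hα hj (by lia)

lemma cword_eq_sturmian_zero (hirr : Irrational α) (hα : α ∈ Set.Ioo (0 : ℝ) 1) {n : ℕ}
    (hn : 0 < n) : cword α n = sturmian α 0 n := by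
  obtain ⟨n, rfl⟩ := Nat.exists_eq_add_one.2 hn
  have hlt : n < convDen (cfCoeff α) (n + 1) := le_convDen (cfCoeff_succ_pos hirr hα) (n + 1)
  rw [cword, sWord_succ_eq_append hirr hα, ← sturmianWord_convDen_succ hirr hα]
  simp [sturmianWord_eq_map, hlt]

end StandardWords

section Subwords

variable {α : ℝ}

lemma mem_subZ_iff {v : ℤ → ℝ} {w : List ℝ} :
    w ∈ SubZ v ↔ w ≠ [] ∧ ∃ k : ℤ, ∀ (i : ℕ) (hi : i < w.length), w[i] = v (k + i) := by
  refine and_congr_right fun _ => exists_congr fun k => ?_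
  rw [List.ext_getElem_iff]
  simp [bind_pure_comp, -List.pure_def, -List.bind_eq_flatMap]

lemma mem_subC_iff {w : List ℝ} :
    w ∈ SubC α ↔
      w ≠ [] ∧ ∃ k : ℕ, 1 ≤ k ∧ ∀ (i : ℕ) (hi : i < w.length), w[i] = cword α (k + i) := by
  refine and_congr_right fun _ => exists_congr fun k => and_congr_right fun _ => ?_
  rw [List.ext_getElem_iff]
  simp

lemma subZ_sturmian_eq_subC (hirr : Irrational α) (hα : α ∈ Set.Ioo (0 : ℝ) 1) (θ : ℝ) :
    SubZ (sturmian α θ) = SubC α := by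
  have hcword {k : ℕ} (hk : 1 ≤ k) (i : ℕ) : cword α (k + i) = sturmian α 0 (k + i) :=
    mod_cast cword_eq_sturmian_zero hirr hα (n := k + i) (by lia)
  ext w
  rw [mem_subZ_iff, mem_subC_iff]
  refine and_congr_right fun _ => ⟨?_, ?_⟩
  · rintro ⟨k, hw⟩
    obtain ⟨k', hk', heq⟩ := exists_pos_sturmian_add_eq hirr hα θ 0 k w.length
    exact ⟨k', hk', fun i hi => by rw [hw i hi, hcword hk', heq i hi]⟩
  · rintro ⟨k, hk, hw⟩
    obtain ⟨k', -, heq⟩ := exists_pos_sturmian_add_eq hirr hα 0 θ k w.length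
    exact ⟨k', fun i hi => by rw [hw i hi, hcword hk, heq i hi]⟩

lemma walpha_eq_subC (hirr : Irrational α) (hα : α ∈ Set.Ioo (0 : ℝ) 1) : Walpha α = SubC α := by
  ext w
  simp only [Walpha, subZ_sturmian_eq_subC hirr hα, Set.mem_ofPred_eq]
  exact ⟨fun ⟨_, _, hw⟩ => hw, fun hw => ⟨0, by simp, hw⟩⟩

end Subwords

theorem subwords_independent_of_theta_general {α : ℝ} (hirr : Irrational α)
    (hα : α ∈ Set.Ioo (0 : ℝ) 1) (θ : ℝ) :
    SubZ (sturmian α θ) = SubC α ∧ Walpha α = SubC α ∧ Walpha α = SubZ (sturmian α θ) :=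
  have hθ := subZ_sturmian_eq_subC hirr hα θ
  have hW := walpha_eq_subC hirr hα
  ⟨hθ, hW, hW.trans hθ.symm⟩

theorem subwords_independent_of_theta
    (α : ℝ) (hirr : Irrational α) (hα : α ∈ Set.Ioo (0 : ℝ) 1) :
    ∀ θ ∈ Set.Ico (0 : ℝ) 1,
      SubZ (sturmian α θ) = SubC α ∧ Walpha α = SubC α ∧ Walpha α = SubZ (sturmian α θ) :=
  fun θ _ => subwords_independent_of_theta_general hirr hα θ
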